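/- arXiv:2501.11991 — 2 statements merged into one kernel-verified Lean document; each statement's English description precedes it below -/
import Mathlib

section
/- For every integer k ≥ 1 and every real number x with x² ≠ 1: Σ_{i=1}^{k} U_{i-1}(x)·U_{k-i}(x) = (k·x·U_k(x) - (k+1)·U_{k-1}(x))/(2(x² - 1)). -/
/-- Evaluation of the Chebyshev polynomial of the first kind `T_n` at a real `x`
(indices extended to all integers via the Chebyshev recurrence). -/
noncomputable def chebT (n : ℤ) (x : ℝ) : ℝ := (Polynomial.Chebyshev.T ℝ n).eval x

/-- Evaluation of the Chebyshev polynomial of the second kind `U_n` at a real `x`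
(indices extended to all integers via the Chebyshev recurrence). -/
noncomputable def chebU (n : ℤ) (x : ℝ) : ℝ := (Polynomial.Chebyshev.U ℝ n).eval x

/-- `Z_n(x) = (U_n(x) - U_{n-1}(x) - 1)/(2(x - 1))`. -/
noncomputable def Zc (n : ℤ) (x : ℝ) : ℝ := (chebU n x - chebU (n - 1) x - 1) / (2 * (x - 1))

/-!
Writing `x = cos θ`, so that `U_n(x) = sin ((n + 1)θ) / sin θ`, the product-to-sum formula for sines
gives `2(x² - 1) U_m U_n = T_{m+n+2} - T_{m-n}`. Along `m + n = k - 1` the first term is constant,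
while the terms `T_{m-n}` sum to `U_{k-1}` (a Dirichlet kernel).
-/

open Finset Polynomial Polynomial.Chebyshev

section

variable (R : Type*) [CommRing R]

theorem two_mul_X_sq_sub_one_mul_chebyshev_U (n : ℤ) :
    2 * (X ^ 2 - 1) * U R n = T R (n + 2) - T R n := by
  linear_combination T_add_two R n - 2 * T_eq_X_mul_T_sub_pol_U R n

theorem chebyshev_U_mul_U (m n : ℤ) :
    2 * (X ^ 2 - 1) * (U R m * U R n) = T R (m + n + 2) - T R (m - n) := by
  induction m using Polynomial.Chebyshev.induct with
  | zero => simpa [-T_add_two] using two_mul_X_sq_sub_one_mul_chebyshev_U R n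
  | one =>
    have hT : T R (1 - n) = T R (n - 1) := by rw [← T_neg, neg_sub]
    rw [U_one, hT]
    linear_combination (norm := ring_nf) 2 * X * two_mul_X_sq_sub_one_mul_chebyshev_U R n
      - T_add_two R (n + 1) + T_sub_one R n
  | add_two m ih₁ ih₀ =>
    linear_combination (norm := ring_nf) 2 * (X ^ 2 - 1) * U R n * U_add_two R m
      + 2 * X * ih₁ - ih₀ - T_add_two R (m + n + 2) + T_add_two R (m - n)
  | neg_add_one m ih₀ ih₁ =>
    linear_combination (norm := ring_nf) 2 * (X ^ 2 - 1) * U R n * U_sub_one R (-m)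
      + 2 * X * ih₀ - ih₁ - T_sub_one R (-m + n + 2) + T_sub_one R (-m - n)

theorem sum_antidiagonal_chebyshev_T_sub (n : ℕ) :
    ∑ p ∈ antidiagonal n, T R ((p.1 : ℤ) - p.2) = U R n := by
  induction n using Nat.twoStepInduction with
  | zero => simp
  | one => simp [Nat.antidiagonal_succ, two_mul]
  | more n ih _ =>
    have split_ends : ∑ p ∈ antidiagonal (n + 2), T R ((p.1 : ℤ) - p.2) =
        T R (-(n + 2)) + (T R (n + 2) + ∑ p ∈ antidiagonal n, T R ((p.1 : ℤ) - p.2)) := by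
      simp [-T_add_two, Nat.antidiagonal_succ_succ']
    rw [split_ends, ih, T_neg]
    push_cast
    linear_combination -U_eq_two_mul_T_add_U R n

theorem sum_antidiagonal_chebyshev_U_mul_U (n : ℕ) :
    2 * (X ^ 2 - 1) * ∑ p ∈ antidiagonal n, U R p.1 * U R p.2 =
      (n + 1 : R[X]) * T R (n + 2) - U R n := by
  have product_to_sum : ∀ p ∈ antidiagonal n, 2 * (X ^ 2 - 1) * (U R p.1 * U R p.2) =
      T R (n + 2) - T R ((p.1 : ℤ) - p.2) := fun p hp => by
    rw [chebyshev_U_mul_U, ← HasAntidiagonal.mem_antidiagonal.mp hp, Nat.cast_add]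
  rw [mul_sum, sum_congr rfl product_to_sum, sum_sub_distrib, sum_antidiagonal_chebyshev_T_sub,
    sum_const, Nat.card_antidiagonal, nsmul_eq_mul, Nat.cast_add_one]

end

theorem sum_Icc_int_eq_sum_antidiagonal {M : Type*} [AddCommMonoid M] (f : ℤ → ℤ → M) (a : ℤ)
    (n : ℕ) : ∑ i ∈ Icc a (a + n), f (i - a) (a + n - i) = ∑ p ∈ antidiagonal n, f p.1 p.2 := by
  have length_eq : (a + n + 1 - a).toNat = n + 1 := by lia
  rw [Int.Icc_eq_finset_map, length_eq, sum_map,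
    Nat.sum_antidiagonal_eq_sum_range_succ fun i j => f i j]
  refine sum_congr rfl fun j hj => ?_
  have hjn : j ≤ n := mem_range_succ_iff.mp hj
  simp only [Function.Embedding.trans_apply, Nat.castEmbedding_apply, addLeftEmbedding_apply,
    Nat.cast_sub hjn, add_sub_cancel_left, add_sub_add_left_eq_sub]

theorem sum_U_pred_mul_U_rev_general (R : Type*) [CommRing R] (k : ℕ) :
    2 * (X ^ 2 - 1) * ∑ i ∈ Icc (1 : ℤ) k, U R (i - 1) * U R (k - i) =
      (k : R[X]) * X * U R k - (k + 1 : R[X]) * U R (k - 1) := by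
  cases k with
  | zero => simp
  | succ n =>
    have cast_succ : ((n + 1 : ℕ) : ℤ) = 1 + n := by rw [Nat.cast_add_one, add_comm]
    rw [cast_succ, sum_Icc_int_eq_sum_antidiagonal fun i j => U R i * U R j,
      sum_antidiagonal_chebyshev_U_mul_U, T_eq_X_mul_U_sub_U, add_sub_cancel_left,
      add_comm (1 : ℤ), Nat.cast_add_one]
    ring

/-- `Σ_{i=1}^{k} U_{i-1}(x)·U_{k-i}(x) = (k·x·U_k(x) - (k+1)·U_{k-1}(x))/(2(x² - 1))`. -/
theorem sum_U_pred_mul_U_rev (k : ℕ) (hk : 1 ≤ k) (x : ℝ) (hx : x ^ 2 ≠ 1) :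
    ∑ i ∈ Finset.Icc (1 : ℤ) (k : ℤ), chebU (i - 1) x * chebU ((k : ℤ) - i) x =
      (k * x * chebU (k : ℤ) x - (k + 1) * chebU ((k : ℤ) - 1) x) / (2 * (x ^ 2 - 1)) := by
  rw [eq_div_iff (mul_ne_zero two_ne_zero (sub_ne_zero.mpr hx)), mul_comm]
  simpa [chebU, eval_finsetSum] using congrArg (eval x) (sum_U_pred_mul_U_rev_general ℝ k)
end

section
/- For every integer k ≥ 1 and every real number x with x² ≠ 1 and T_3(x) ≠ 1: Σ_{i=1}^{k} U_{k-i}(x)²·U_i(x) = ((2 + T_{2k+4}(x))·Z_{k+2}(x) - T_{2k+4}(x)·U_2(x)·Z_{k+2}(T_3(x)))/(4(1 - x²)) - U_k(x)² + U_{2k+3}(x)·(Z_{k+3}(T_3(x)) - Z_{k+1}(T_3(x)) + Z_{k+1}(x) - Z_{k+3}(x))/(8(1 - x²)). -/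
/-!
The square is linearised by `2 (1 - x²) U_m(x)² = 1 - T_{2m+2}(x)`, and the product-to-sum and
addition formulas then write `4 (1 - x²) U_{k-j}(x)² U_j(x)` as a combination, with coefficients
independent of `j`, of `U_j(x)`, `U_{3j+2}(x)`, `T_{3j+3}(x)` and `T_{j+1}(x)`. Substituting
`U_{3j+2} = U_2 · U_j ∘ T_3` and `T_{3j+3} = T_{j+1} ∘ T_3` leaves sums of `U_j` and `T_{j+1}` at
the two points `x` and `T_3(x)`. These telescope to values of `Z` if the range of `j` is
`0 ≤ j ≤ k + 1`; the extra term `j = 0` is `U_k(x)²`, and the extra term `j = k + 1` vanishes.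
-/

section Polynomial

open Polynomial
open Polynomial.Chebyshev (T U)

variable (R : Type*) [CommRing R]

theorem chebyshevU_add (m n : ℤ) :
    U R (m + n) = U R m * T R n + T R (m + 1) * U R (n - 1) := by
  induction n using Polynomial.Chebyshev.induct with
  | zero => simp
  | one => simpa [mul_comm] using Chebyshev.U_eq_X_mul_U_add_T R m
  | add_two n ih_succ ih =>
    have hU := Chebyshev.U_add_two R (m + n)
    have hT := Chebyshev.T_add_two R n
    have hU' := Chebyshev.U_add_one R n
    ring_nf at ih_succ ih hU hT hU' ⊢
    linear_combination hU + 2 * X * ih_succ - ih - U R m * hT - T R (1 + m) * hU'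
  | neg_add_one n ih ih_succ =>
    have hU := Chebyshev.U_sub_one R (m - n)
    have hT := Chebyshev.T_sub_one R (-n)
    have hU' := Chebyshev.U_sub_two R (-n)
    ring_nf at ih_succ ih hU hT hU' ⊢
    linear_combination hU + 2 * X * ih - ih_succ - U R m * hT - T R (1 + m) * hU'

theorem chebyshevU_sub (m n : ℤ) :
    U R (m - n) = U R m * T R n - T R (m + 1) * U R (n - 1) := by
  rw [sub_eq_add_neg m n, chebyshevU_add, Chebyshev.T_neg, Chebyshev.U_neg_sub_one]
  ring

theorem two_mul_chebyshevT_mul_chebyshevU (m n : ℤ) :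
    2 * T R m * U R n = U R (n + m) + U R (n - m) := by
  rw [chebyshevU_add R n m, chebyshevU_sub R n m]
  ring

theorem two_mul_one_sub_X_sq_mul_chebyshevU_mul_chebyshevU (m n : ℤ) :
    2 * (1 - X ^ 2) * U R m * U R n = T R (m - n) - T R (m + n + 2) := by
  have hU := Chebyshev.one_sub_X_sq_mul_U_eq_pol_in_T R n
  have h_succ := two_mul_chebyshevT_mul_chebyshevU R (n + 1) m
  have h_add_two := two_mul_chebyshevT_mul_chebyshevU R (n + 2) m
  have hT_add := Chebyshev.T_eq_U_sub_X_mul_U R (m + n + 2)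
  have hT_sub := Chebyshev.T_eq_X_mul_U_sub_U R (m - n - 2)
  ring_nf at hU h_succ h_add_two hT_add hT_sub ⊢
  linear_combination 2 * U R m * hU + X * h_succ - h_add_two + hT_add - hT_sub

theorem chebyshevU_mul_sub_one (m n : ℤ) :
    U R (m * n - 1) = (U R (m - 1)).comp (T R n) * U R (n - 1) := by
  induction m using Polynomial.Chebyshev.induct' with
  | zero => simp
  | one => simp
  | add_two m ih_succ ih =>
    have h_prod := two_mul_chebyshevT_mul_chebyshevU R n ((m + 1) * n - 1)
    have h_rec : (U R (m + 2 - 1)).comp (T R n) =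
        2 * T R n * (U R (m + 1 - 1)).comp (T R n) - (U R (m - 1)).comp (T R n) := by
      rw [show (m + 2 - 1 : ℤ) = m - 1 + 2 by ring, Chebyshev.U_add_two]
      simp [sub_add_cancel]
    rw [show (m + 1) * n - 1 + n = (m + 2) * n - 1 by ring,
      show (m + 1) * n - 1 - n = m * n - 1 by ring, ih_succ, ih] at h_prod
    linear_combination -U R (n - 1) * h_rec - h_prod
  | neg m ih =>
    rw [neg_mul, Chebyshev.U_neg_sub_one, Chebyshev.U_neg_sub_one, ih, neg_comp, neg_mul]

theorem four_mul_one_sub_X_sq_mul_chebyshevU_sq_mul_chebyshevU (k j : ℤ) :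
    4 * (1 - X ^ 2) * (U R (k - j) ^ 2 * U R j) =
      (2 + T R (2 * k + 4)) * U R j - T R (2 * k + 4) * U R 2 * (U R j).comp (T R 3) +
        U R (2 * k + 3) * ((T R (j + 1)).comp (T R 3) - T R (j + 1)) := by
  have h_sq : 2 * (1 - X ^ 2) * U R (k - j) ^ 2 = 1 - T R (2 * (k - j) + 2) := by
    simpa [pow_two, mul_assoc, two_mul] using
      two_mul_one_sub_X_sq_mul_chebyshevU_mul_chebyshevU R (k - j) (k - j)
  have h_prod : 2 * T R (2 * (k - j) + 2) * U R j =
      U R (3 * j + 2 - (2 * k + 4)) - U R (j - (2 * k + 4)) := by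
    rw [two_mul_chebyshevT_mul_chebyshevU, sub_eq_add_neg (U R _), ← Chebyshev.U_neg_sub_two]
    ring_nf
  have hU : U R (3 * j + 2) = (U R j).comp (T R 3) * U R 2 := by
    simpa [show (j + 1) * 3 - 1 = 3 * j + 2 by ring] using chebyshevU_mul_sub_one R (j + 1) 3
  have hT : T R (3 * j + 2 + 1) = (T R (j + 1)).comp (T R 3) := by
    rw [← Chebyshev.T_mul, show (j + 1) * 3 = 3 * j + 2 + 1 by ring]
  rw [chebyshevU_sub R (3 * j + 2), chebyshevU_sub R j, hU, hT,
    show 2 * k + 4 - 1 = 2 * k + 3 by ring] at h_prod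
  linear_combination 2 * U R j * h_sq - h_prod

theorem two_mul_X_sub_one_mul_sum_chebyshevU (n : ℕ) :
    2 * (X - 1) * ∑ j ∈ Finset.range n, U R j = U R n - U R (n - 1) - 1 := by
  induction n with
  | zero => simp
  | succ n ih =>
    rw [Finset.sum_range_succ, mul_add, ih, Nat.cast_add_one, add_sub_cancel_right,
      Chebyshev.U_add_one]
    ring

theorem two_mul_sum_chebyshevT_add_one (n : ℕ) :
    2 * ∑ j ∈ Finset.range n, T R (j + 1) = U R n + U R (n - 1) - 1 := by
  induction n with
  | zero => simp
  | succ n ih =>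
    have hT := Chebyshev.two_mul_T_eq_U_sub_U R (n - 1)
    rw [Finset.sum_range_succ, mul_add, ih, Nat.cast_add_one]
    ring_nf at hT ⊢
    linear_combination hT

theorem sum_range_add_two_chebyshevU_sq_mul_chebyshevU (k : ℕ) (x : R) :
    ∑ j ∈ Finset.range (k + 2), (U R (k - j)).eval x ^ 2 * (U R j).eval x =
      ∑ i ∈ Finset.Icc (1 : ℤ) k, (U R (k - i)).eval x ^ 2 * (U R i).eval x +
        (U R k).eval x ^ 2 := by
  rw [Finset.sum_range_succ, Finset.sum_range_succ']
  simp [Int.Icc_eq_finset_map, add_comm]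

end Polynomial

section Field

open Polynomial
open Polynomial.Chebyshev (T U)

variable {K : Type*} [Field K]

/-- The function `Z_n` over an arbitrary field, where for `n ≥ 0` it is the partial sum
`U_0(x) + ⋯ + U_{n-1}(x)` in closed form. The value is the junk value `0` if `x = 1` or `2 = 0`. -/
noncomputable def chebyshevZ (n : ℤ) (x : K) : K :=
  ((U K n).eval x - (U K (n - 1)).eval x - 1) / (2 * (x - 1))

variable [NeZero (2 : K)] {x : K}

theorem sum_eval_chebyshevU (hx : x ≠ 1) (n : ℕ) :
    ∑ j ∈ Finset.range n, (U K j).eval x = chebyshevZ n x := by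
  have h_sum := congrArg (eval x) (two_mul_X_sub_one_mul_sum_chebyshevU K n)
  simp only [eval_mul, eval_sub, eval_ofNat, eval_X, eval_one, eval_finsetSum] at h_sum
  rw [chebyshevZ, eq_div_iff (mul_ne_zero two_ne_zero (sub_ne_zero.mpr hx)), mul_comm, h_sum]

theorem chebyshevZ_add_one_sub_chebyshevZ_sub_one (hx : x ≠ 1) (n : ℤ) :
    chebyshevZ (n + 1) x - chebyshevZ (n - 1) x = (U K n).eval x + (U K (n - 1)).eval x := by
  have h_succ := congrArg (eval x) (Chebyshev.U_add_one K n)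
  have h_pred := congrArg (eval x) (Chebyshev.U_sub_two K n)
  simp only [eval_mul, eval_sub, eval_ofNat, eval_X] at h_succ h_pred
  rw [chebyshevZ, chebyshevZ, ← sub_div, add_sub_cancel_right, sub_sub n 1 1, one_add_one_eq_two,
    div_eq_iff (mul_ne_zero two_ne_zero (sub_ne_zero.mpr hx))]
  linear_combination h_succ + h_pred

theorem two_mul_sum_eval_chebyshevT_add_one (hx : x ≠ 1) (n : ℕ) :
    2 * ∑ j ∈ Finset.range n, (T K (j + 1)).eval x =
      chebyshevZ (n + 1) x - chebyshevZ (n - 1) x - 1 := by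
  have h_sum := congrArg (eval x) (two_mul_sum_chebyshevT_add_one K n)
  simp only [eval_mul, eval_sub, eval_add, eval_ofNat, eval_one, eval_finsetSum] at h_sum
  rw [h_sum, chebyshevZ_add_one_sub_chebyshevZ_sub_one hx]

theorem four_mul_one_sub_sq_mul_sum_chebyshevU_sq_mul_chebyshevU
    (hT3 : (T K 3).eval x ≠ 1) (k : ℤ) (n : ℕ) :
    4 * (1 - x ^ 2) * ∑ j ∈ Finset.range n, (U K (k - j)).eval x ^ 2 * (U K j).eval x =
      (2 + (T K (2 * k + 4)).eval x) * chebyshevZ n x -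
        (T K (2 * k + 4)).eval x * (U K 2).eval x * chebyshevZ n ((T K 3).eval x) +
      (U K (2 * k + 3)).eval x *
        (chebyshevZ (n + 1) ((T K 3).eval x) - chebyshevZ (n - 1) ((T K 3).eval x) +
          chebyshevZ (n - 1) x - chebyshevZ (n + 1) x) / 2 := by
  set y := (T K 3).eval x
  have hx : x ≠ 1 := by
    rintro rfl
    exact hT3 (Chebyshev.T_eval_one K 3)
  have h_term (j : ℤ) : 4 * (1 - x ^ 2) * ((U K (k - j)).eval x ^ 2 * (U K j).eval x) =
      (2 + (T K (2 * k + 4)).eval x) * (U K j).eval x -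
        (T K (2 * k + 4)).eval x * (U K 2).eval x * (U K j).eval y +
      (U K (2 * k + 3)).eval x * ((T K (j + 1)).eval y - (T K (j + 1)).eval x) := by
    simpa only [eval_mul, eval_sub, eval_add, eval_pow, eval_ofNat, eval_one, eval_X, eval_comp]
      using congrArg (eval x) (four_mul_one_sub_X_sq_mul_chebyshevU_sq_mul_chebyshevU K k j)
  have h_diff : ∑ j ∈ Finset.range n, ((T K (j + 1)).eval y - (T K (j + 1)).eval x) =
      (chebyshevZ (n + 1) y - chebyshevZ (n - 1) y +
        chebyshevZ (n - 1) x - chebyshevZ (n + 1) x) / 2 := by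
    rw [eq_div_iff two_ne_zero, Finset.sum_sub_distrib]
    linear_combination two_mul_sum_eval_chebyshevT_add_one hT3 n -
      two_mul_sum_eval_chebyshevT_add_one hx n
  rw [Finset.mul_sum, Finset.sum_congr rfl fun (j : ℕ) _ ↦ h_term j, Finset.sum_add_distrib,
    Finset.sum_sub_distrib, ← Finset.mul_sum, ← Finset.mul_sum, ← Finset.mul_sum, h_diff,
    sum_eval_chebyshevU hx, sum_eval_chebyshevU hT3, mul_div_assoc]

theorem sum_q12_general (k : ℕ) (hx : x ^ 2 ≠ 1) (hT3 : (T K 3).eval x ≠ 1) :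
    ∑ i ∈ Finset.Icc (1 : ℤ) k, (U K (k - i)).eval x ^ 2 * (U K i).eval x =
      ((2 + (T K (2 * k + 4)).eval x) * chebyshevZ (k + 2) x -
          (T K (2 * k + 4)).eval x * (U K 2).eval x * chebyshevZ (k + 2) ((T K 3).eval x)) /
        (4 * (1 - x ^ 2)) -
      (U K k).eval x ^ 2 +
      (U K (2 * k + 3)).eval x *
          (chebyshevZ (k + 3) ((T K 3).eval x) - chebyshevZ (k + 1) ((T K 3).eval x) +
            chebyshevZ (k + 1) x - chebyshevZ (k + 3) x) /
        (8 * (1 - x ^ 2)) := by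
  have h_two : (2 : K) ≠ 0 := two_ne_zero
  have h_four : (4 : K) ≠ 0 := by
    simpa only [show (2 : K) * 2 = 4 by norm_num] using mul_ne_zero h_two h_two
  have hx' : 1 - x ^ 2 ≠ 0 := sub_ne_zero.mpr hx.symm
  have h_sum := four_mul_one_sub_sq_mul_sum_chebyshevU_sq_mul_chebyshevU hT3 k (k + 2)
  rw [sum_range_add_two_chebyshevU_sq_mul_chebyshevU, mul_comm,
    ← eq_div_iff (mul_ne_zero h_four hx'), Nat.cast_add, Nat.cast_two,
    show (k : ℤ) + 2 + 1 = k + 3 by ring, show (k : ℤ) + 2 - 1 = k + 1 by ring] at h_sum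
  rw [eq_sub_of_add_eq h_sum, show (8 : K) = 2 * 4 by norm_num]
  field_simp
  ring

end Field

/-- `Σ_{i=1}^{k} U_{k-i}(x)²·U_i(x)` in closed form (identity `q₁₂`). -/
theorem sum_q12 (k : ℕ) (hk : 1 ≤ k) (x : ℝ) (hx : x ^ 2 ≠ 1) (hT3 : chebT 3 x ≠ 1) :
    ∑ i ∈ Finset.Icc (1 : ℤ) (k : ℤ), chebU ((k : ℤ) - i) x ^ 2 * chebU i x =
      ((2 + chebT (2 * (k : ℤ) + 4) x) * Zc ((k : ℤ) + 2) x -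
          chebT (2 * (k : ℤ) + 4) x * chebU 2 x * Zc ((k : ℤ) + 2) (chebT 3 x)) /
        (4 * (1 - x ^ 2)) -
      chebU (k : ℤ) x ^ 2 +
      chebU (2 * (k : ℤ) + 3) x *
          (Zc ((k : ℤ) + 3) (chebT 3 x) - Zc ((k : ℤ) + 1) (chebT 3 x) +
            Zc ((k : ℤ) + 1) x - Zc ((k : ℤ) + 3) x) /
        (8 * (1 - x ^ 2)) :=
  sum_q12_general k hx hT3
end
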